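/- Let (R, m) be a commutative Noetherian local ring that is not catenary, so that there exists a prime ideal p of R with ht(p) < dim(R) − dim(R/p). Then for any such prime ideal p, cd(p) > ht(p). -/

import Mathlib

universe u

open CategoryTheory

/-- The cohomological dimension of `M` with respect to `I`:
`cd(I,M) = sup { i ∈ ℕ | H^i_I(M) ≠ 0 }`, as an element of `ℕ∞`. -/
noncomputable def cohomologicalDimension {R : Type u} [CommRing R] (I : Ideal R)
    (M : ModuleCat.{u} R) : ℕ∞ :=
  sSup {c : ℕ∞ | ∃ i : ℕ, c = i ∧ Nontrivial ((localCohomology I i).obj M)}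

/-- The height of an ideal: the infimum of the heights of the prime ideals containing it. -/
noncomputable def idealHeight {R : Type u} [CommRing R] (I : Ideal R) : ℕ∞ :=
  ⨅ (p : PrimeSpectrum R) (_ : I ≤ p.asIdeal), Order.height p

/-!
Write `c = cd(I, M)` and `e = dim R/I`. Adjoining one element to an ideal raises the cohomological
dimension by at most one, and adjoining to `I` lifts of a system of parameters of `R/I` gives an
ideal with radical `𝔪`; hence `H^i_𝔪(M) = 0` for `i > c + e`. As `H^i_𝔪(M) ≠ 0` for `i = dim M`, it
follows that `dim M ≤ c + e`, and the theorem is the case `M = R`.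

The nonvanishing is proved by induction on `d = dim M`. The module `W = H^{d-1}_𝔪(M)` is Artinian,
so some parameter `x` of `M` has `xW` minimal, that is, `xyW = xW` for all parameters `y`. If
`H^d_𝔪(M)` vanished, then `W` would surject onto `H^{d-1}_𝔪(M/yM)`, which is killed by `y`, and so
`x` would kill `H^{d-1}_𝔪(M/yM)` for every parameter `y`. For `d ≥ 2` there is a `y` such that
multiplication by `x` is surjective on this module, which is nonzero by induction; for `d = 1` it is
`M/yM`, and `y = x²` is impossible.
-/

open Opposite

section PowTorsion

variable {R : Type*} [CommRing R] {I : Ideal R} {A B : Type*} [AddCommGroup A] [Module R A]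
  [AddCommGroup B] [Module R B]

/-- The `I`-power torsion submodule `Γ_I(A)`: the elements annihilated by some power of `I`. The
module `A` is `I`-power torsion if `powTorsion I A = ⊤` and `I`-power torsion-free if
`powTorsion I A = ⊥`. -/
def powTorsion (I : Ideal R) (A : Type*) [AddCommGroup A] [Module R A] : Submodule R A :=
  ⨆ t : ℕ, Submodule.torsionBySet R A (I ^ t : Ideal R)

lemma mem_powTorsion {a : A} : a ∈ powTorsion I A ↔ ∃ t, ∀ r ∈ I ^ t, r • a = 0 := by
  have hmono : Monotone fun t : ℕ => Submodule.torsionBySet R A (I ^ t : Ideal R) :=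
    fun _ _ hts => Submodule.torsionBySet_le_torsionBySet_of_subset (Ideal.pow_le_pow_right hts)
  rw [powTorsion, Submodule.mem_iSup_of_directed _ hmono.directed_le]
  simp only [Submodule.mem_torsionBySet_iff, Subtype.forall, SetLike.mem_coe]

lemma map_mem_powTorsion (f : A →ₗ[R] B) {a : A} (ha : a ∈ powTorsion I A) :
    f a ∈ powTorsion I B := by
  obtain ⟨t, ht⟩ := mem_powTorsion.1 ha
  exact mem_powTorsion.2 ⟨t, fun r hr => by rw [← map_smul, ht r hr, map_zero]⟩

lemma map_mem_powTorsion_iff {f : A →ₗ[R] B} (hf : Function.Injective f) {a : A} :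
    f a ∈ powTorsion I B ↔ a ∈ powTorsion I A := by
  simp only [mem_powTorsion, ← map_smul, map_eq_zero_iff f hf]

lemma powTorsion_eq_top_of_le {N : Submodule R A} (hN : N ≤ powTorsion I A) :
    powTorsion I N = ⊤ :=
  Submodule.eq_top_iff'.2 fun a => (map_mem_powTorsion_iff N.injective_subtype).1 (hN a.2)

lemma powTorsion_eq_top_of_surjective (hA : powTorsion I A = ⊤) {f : A →ₗ[R] B}
    (hf : Function.Surjective f) : powTorsion I B = ⊤ := by
  refine Submodule.eq_top_iff'.2 fun b => ?_
  obtain ⟨a, rfl⟩ := hf b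
  exact map_mem_powTorsion f (hA.ge Submodule.mem_top)

lemma exists_pow_le_annihilator [Module.Finite R A] (hA : powTorsion I A = ⊤) :
    ∃ t : ℕ, I ^ t ≤ Module.annihilator R A := by
  obtain ⟨S, hS⟩ := Module.Finite.fg_top (R := R) (M := A)
  choose t ht using fun a : A => mem_powTorsion.1 (hA.ge Submodule.mem_top (x := a))
  refine ⟨S.sup t, fun r hr => ?_⟩
  rw [← Submodule.annihilator_top, ← hS, Submodule.mem_annihilator_span]
  exact fun s => ht s r (Ideal.pow_le_pow_right (Finset.le_sup s.2) hr)

lemma powTorsion_quotient_powTorsion [IsNoetherian R A] (I : Ideal R) :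
    powTorsion I (A ⧸ powTorsion I A) = ⊥ := by
  obtain ⟨t, ht⟩ := exists_pow_le_annihilator (powTorsion_eq_top_of_le (le_refl (powTorsion I A)))
  refine (Submodule.eq_bot_iff _).2 fun c hc => ?_
  obtain ⟨a, rfl⟩ := (powTorsion I A).mkQ_surjective c
  obtain ⟨s, hs⟩ := mem_powTorsion.1 hc
  have hsa : ∀ r ∈ I ^ s, r • a ∈ powTorsion I A := fun r hr => by
    rw [← Submodule.Quotient.mk_eq_zero]
    exact hs r hr
  have hle : I ^ (t + s) ≤ Ideal.torsionOf R A a := by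
    rw [pow_add, Ideal.mul_le]
    intro x hx y hy
    rw [Ideal.mem_torsionOf_iff, mul_smul]
    exact congrArg Subtype.val (Module.mem_annihilator.1 (ht hx) ⟨y • a, hsa y hy⟩)
  exact (Submodule.Quotient.mk_eq_zero _).2 (mem_powTorsion.2 ⟨t + s, hle⟩)

end PowTorsion

section LocalCohomologyModule

variable {R : Type u} [CommRing R]

/-- The module `R ⧸ I ^ t`, as a term of Mathlib's inverse system defining local cohomology. -/
noncomputable abbrev quotPow (I : Ideal R) (t : ℕ) : ModuleCat.{u} R :=
  (localCohomology.ringModIdeals (localCohomology.idealPowersDiagram I)).obj (op t)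

/-- The projection `R ⧸ I ^ s ⟶ R ⧸ I ^ t` for `t ≤ s`, as a transition map of Mathlib's inverse
system defining local cohomology. -/
noncomputable abbrev quotPowMap (I : Ideal R) {t s : ℕ} (h : t ≤ s) :
    quotPow I s ⟶ quotPow I t :=
  (localCohomology.ringModIdeals (localCohomology.idealPowersDiagram I)).map (homOfLE h).op

/-- The transition maps of the direct system `Ext^i (R ⧸ I ^ t, M)`. -/
noncomputable def extTransition (I : Ideal R) (i : ℕ) (M : ModuleCat.{u} R) (t s : ℕ) (h : t ≤ s) :
    Abelian.Ext.{u} (quotPow I t) M i →ₗ[R] Abelian.Ext.{u} (quotPow I s) M i :=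
  (Abelian.Ext.mk₀ (quotPowMap I h)).precompOfLinear R M (zero_add i)

lemma extTransition_apply (I : Ideal R) (i : ℕ) (M : ModuleCat.{u} R) {t s : ℕ} (h : t ≤ s)
    (α : Abelian.Ext.{u} (quotPow I t) M i) :
    extTransition I i M t s h α = (Abelian.Ext.mk₀ (quotPowMap I h)).comp α (zero_add i) := rfl

instance (I : Ideal R) (i : ℕ) (M : ModuleCat.{u} R) :
    DirectedSystem (fun t => Abelian.Ext.{u} (quotPow I t) M i)
      (fun t s h => extTransition I i M t s h) where
  map_self t α := by
    simp [extTransition_apply, quotPowMap]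
  map_map t s r h h' α := by
    simp only [extTransition_apply, Abelian.Ext.mk₀_comp_mk₀_assoc, ← Functor.map_comp,
      ← op_comp, homOfLE_comp]

/-- The `i`-th local cohomology module `H^i_I(M)`, as the direct limit of the modules
`Ext^i (R ⧸ I ^ t, M)`. It is built from `CategoryTheory.Abelian.Ext`, for which long exact
sequences are available, whereas Mathlib's `localCohomology` is built from left derived functors. -/
abbrev LocalCohomologyModule (I : Ideal R) (i : ℕ) (M : Type u) [AddCommGroup M] [Module R M] :
    Type u :=
  Module.DirectLimit (fun t => Abelian.Ext.{u} (quotPow I t) (ModuleCat.of R M) i)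
    (fun t s h => extTransition I i (ModuleCat.of R M) t s h)

namespace LocalCohomologyModule

variable {I : Ideal R} {i j k a b : ℕ} {A B C : Type u} [AddCommGroup A] [Module R A]
  [AddCommGroup B] [Module R B] [AddCommGroup C] [Module R C]

variable (I i A) in
/-- The canonical map from `Ext^i (R ⧸ I ^ t, A)` to the direct limit. -/
noncomputable abbrev of (t : ℕ) :
    Abelian.Ext.{u} (quotPow I t) (ModuleCat.of R A) i →ₗ[R] LocalCohomologyModule I i A :=
  Module.DirectLimit.of R ℕ (fun t => Abelian.Ext.{u} (quotPow I t) (ModuleCat.of R A) i)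
    (fun t s h => extTransition I i (ModuleCat.of R A) t s h) t

lemma exists_of (z : LocalCohomologyModule I i A) : ∃ t α, of I i A t α = z :=
  Module.DirectLimit.exists_of z

lemma of_extTransition {t s : ℕ} (h : t ≤ s)
    (α : Abelian.Ext.{u} (quotPow I t) (ModuleCat.of R A) i) :
    of I i A s (extTransition I i (ModuleCat.of R A) t s h α) = of I i A t α :=
  Module.DirectLimit.of_f

lemma exists_extTransition_eq_zero {t : ℕ}
    {α : Abelian.Ext.{u} (quotPow I t) (ModuleCat.of R A) i} (h : of I i A t α = 0) :
    ∃ s, ∃ hs : t ≤ s, extTransition I i (ModuleCat.of R A) t s hs α = 0 :=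
  Module.DirectLimit.of.zero_exact h

lemma powTorsion_eq_top : powTorsion I (LocalCohomologyModule I i A) = ⊤ := by
  refine Submodule.eq_top_iff'.2 fun z => ?_
  obtain ⟨t, α, rfl⟩ := exists_of z
  refine mem_powTorsion.2 ⟨t, fun r hr => ?_⟩
  have hr_smul_id : r • 𝟙 (quotPow I t) = 0 := by
    ext x
    obtain ⟨x, rfl⟩ := Ideal.Quotient.mk_surjective x
    exact Ideal.Quotient.eq_zero_iff_mem.2 (Ideal.mul_mem_right x _ hr)
  rw [← map_smul, ← Abelian.Ext.mk₀_id_comp α, ← Abelian.Ext.smul_comp, ← Abelian.Ext.mk₀_smul,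
    hr_smul_id, Abelian.Ext.mk₀_zero, Abelian.Ext.zero_comp, map_zero]

lemma extTransition_comp (β : Abelian.Ext.{u} (ModuleCat.of R A) (ModuleCat.of R B) a)
    (h : i + a = j) {t s : ℕ} (hs : t ≤ s)
    (α : Abelian.Ext.{u} (quotPow I t) (ModuleCat.of R A) i) :
    extTransition I j (ModuleCat.of R B) t s hs (α.comp β h) =
      (extTransition I i (ModuleCat.of R A) t s hs α).comp β h :=
  (Abelian.Ext.comp_assoc _ _ _ (zero_add i) h (by lia)).symm

variable (I) in
/-- The map `H^i_I(A) → H^(i+a)_I(B)` induced by Yoneda composition with a class in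
`Ext^a (A, B)`. -/
noncomputable def postcomp (β : Abelian.Ext.{u} (ModuleCat.of R A) (ModuleCat.of R B) a)
    (h : i + a = j) : LocalCohomologyModule I i A →ₗ[R] LocalCohomologyModule I j B :=
  Module.DirectLimit.map (fun t => β.postcompOfLinear R (quotPow I t) h) fun _ _ hts =>
    LinearMap.ext fun α => (extTransition_comp β h hts α).symm

lemma postcomp_of (β : Abelian.Ext.{u} (ModuleCat.of R A) (ModuleCat.of R B) a) (h : i + a = j)
    (t : ℕ) (α : Abelian.Ext.{u} (quotPow I t) (ModuleCat.of R A) i) :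
    postcomp I β h (of I i A t α) = of I j B t (α.comp β h) :=
  Module.DirectLimit.map_apply_of _ _ _

lemma postcomp_postcomp (β : Abelian.Ext.{u} (ModuleCat.of R A) (ModuleCat.of R B) a)
    (γ : Abelian.Ext.{u} (ModuleCat.of R B) (ModuleCat.of R C) b) (hβ : i + a = j)
    (hγ : j + b = k) (z : LocalCohomologyModule I i A) :
    postcomp I γ hγ (postcomp I β hβ z) = postcomp I (β.comp γ rfl) (by lia) z := by
  obtain ⟨t, α, rfl⟩ := exists_of z
  rw [postcomp_of, postcomp_of, postcomp_of, Abelian.Ext.comp_assoc _ _ _ hβ rfl (by lia)]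

lemma exact_postcomp (β : Abelian.Ext.{u} (ModuleCat.of R A) (ModuleCat.of R B) a)
    (γ : Abelian.Ext.{u} (ModuleCat.of R B) (ModuleCat.of R C) b) (hβ : i + a = j)
    (hγ : j + b = k) (hβγ : β.comp γ rfl = 0)
    (hexact : ∀ (X : ModuleCat.{u} R) (α : Abelian.Ext.{u} X (ModuleCat.of R B) j),
      α.comp γ hγ = 0 → ∃ x : Abelian.Ext.{u} X (ModuleCat.of R A) i, x.comp β hβ = α) :
    Function.Exact (postcomp I β hβ) (postcomp I γ hγ) := by
  refine fun z => ⟨fun hz => ?_, ?_⟩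
  · obtain ⟨t, α, rfl⟩ := exists_of z
    rw [postcomp_of] at hz
    obtain ⟨s, hs, hα⟩ := exists_extTransition_eq_zero hz
    rw [extTransition_comp] at hα
    obtain ⟨x, hx⟩ := hexact _ _ hα
    exact ⟨of I i A s x, by rw [postcomp_of, hx, of_extTransition]⟩
  · rintro ⟨y, rfl⟩
    obtain ⟨t, α, rfl⟩ := exists_of y
    rw [postcomp_postcomp, hβγ, postcomp_of, Abelian.Ext.comp_zero, map_zero]

variable (I i) in
/-- The map on local cohomology induced by a linear map. -/
noncomputable def map (f : A →ₗ[R] B) :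
    LocalCohomologyModule I i A →ₗ[R] LocalCohomologyModule I i B :=
  postcomp I (Abelian.Ext.mk₀ (ModuleCat.ofHom f)) (add_zero i)

lemma map_comp (f : A →ₗ[R] B) (g : B →ₗ[R] C) : map I i (g ∘ₗ f) = map I i g ∘ₗ map I i f := by
  refine LinearMap.ext fun z => ?_
  rw [map, map, map, LinearMap.comp_apply, postcomp_postcomp, Abelian.Ext.mk₀_comp_mk₀,
    ModuleCat.ofHom_comp]

lemma map_lsmul (r : R) (z : LocalCohomologyModule I i A) :
    map I i (LinearMap.lsmul R A r) z = r • z := by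
  obtain ⟨t, α, rfl⟩ := exists_of z
  rw [map, postcomp_of, ← map_smul, Abelian.Ext.smul_eq_comp_mk₀]
  rfl

variable {f : A →ₗ[R] B} {g : B →ₗ[R] C} (hf : Function.Injective f) (hfg : Function.Exact f g)
  (hg : Function.Surjective g)

include hf hfg hg in
lemma shortExact_ofHom : (ShortComplex.mk (ModuleCat.ofHom f) (ModuleCat.ofHom g)
    (by ext x; exact hfg.apply_apply_eq_zero x)).ShortExact where
  exact := (ShortComplex.ShortExact.moduleCat_exact_iff_function_exact _).2 hfg
  mono_f := (ModuleCat.mono_iff_injective _).2 hf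
  epi_g := (ModuleCat.epi_iff_surjective _).2 hg

variable (I i) in
/-- The connecting homomorphism of a short exact sequence. -/
noncomputable def δ : LocalCohomologyModule I i C →ₗ[R] LocalCohomologyModule I (i + 1) A :=
  postcomp I (A := C) (B := A) (shortExact_ofHom hf hfg hg).extClass rfl

include hf hfg hg in
lemma exact_map_map : Function.Exact (map I i f) (map I i g) :=
  have h := shortExact_ofHom hf hfg hg
  exact_postcomp _ _ (add_zero i) (add_zero i)
    (by
      have hcomp : ModuleCat.ofHom f ≫ ModuleCat.ofHom g = 0 :=
        ModuleCat.hom_ext hfg.linearMap_comp_eq_zero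
      rw [Abelian.Ext.mk₀_comp_mk₀, hcomp, Abelian.Ext.mk₀_zero])
    fun _ _ => Abelian.Ext.covariant_sequence_exact₂ _ h _

lemma exact_map_δ : Function.Exact (map I i g) (δ I i hf hfg hg) :=
  have h := shortExact_ofHom hf hfg hg
  exact_postcomp _ _ (add_zero i) rfl h.comp_extClass
    fun _ _ hα => Abelian.Ext.covariant_sequence_exact₃ _ h _ rfl hα

lemma exact_δ_map : Function.Exact (δ I i hf hfg hg) (map I (i + 1) f) :=
  have h := shortExact_ofHom hf hfg hg
  exact_postcomp _ _ rfl (add_zero (i + 1)) h.extClass_comp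
    fun _ _ hα => Abelian.Ext.covariant_sequence_exact₁ _ h _ hα rfl

lemma subsingleton_of_injective [Module.Injective R A] :
    Subsingleton (LocalCohomologyModule I (i + 1) A) := by
  have : CategoryTheory.Injective (ModuleCat.of R A) :=
    Module.injective_object_of_injective_module ..
  refine subsingleton_of_forall_eq 0 fun z => ?_
  obtain ⟨t, α, rfl⟩ := exists_of z
  rw [Abelian.Ext.eq_zero_of_injective α, map_zero]

end LocalCohomologyModule
end LocalCohomologyModule

section DegreeZero

namespace LocalCohomologyModule

variable {R : Type u} [CommRing R] {I : Ideal R} {A B : Type u} [AddCommGroup A] [Module R A]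
  [AddCommGroup B] [Module R B]

variable (I A) in
/-- Evaluation at `1` of a homomorphism `R ⧸ I ^ t ⟶ A`, the latter seen as a class in
`Ext^0 (R ⧸ I ^ t, A)`. -/
noncomputable def evalOne (t : ℕ) : Abelian.Ext.{u} (quotPow I t) (ModuleCat.of R A) 0 →ₗ[R] A :=
  LinearMap.applyₗ (Ideal.Quotient.mk (I ^ t) 1) ∘ₗ
    (Abelian.Ext.linearEquiv₀.trans ModuleCat.homLinearEquiv).toLinearMap

lemma evalOne_mk₀ (t : ℕ) (f : quotPow I t ⟶ ModuleCat.of R A) :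
    evalOne I A t (Abelian.Ext.mk₀ f) = f.hom (Ideal.Quotient.mk (I ^ t) 1) :=
  congrArg (fun φ : quotPow I t ⟶ ModuleCat.of R A => φ.hom (Ideal.Quotient.mk (I ^ t) 1))
    (Abelian.Ext.linearEquiv₀ (R := R).apply_symm_apply f)

lemma evalOne_injective (t : ℕ) : Function.Injective (evalOne I A t) := by
  refine Function.Injective.comp (g := LinearMap.applyₗ _) (fun φ ψ h => ?_)
    (LinearEquiv.injective _)
  exact Submodule.linearMap_qext _ (LinearMap.ext_ring h)

variable (I A) in
/-- The map `H^0_I(A) → A` evaluating homomorphisms `R ⧸ I ^ t ⟶ A` at `1`. -/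
noncomputable def eval : LocalCohomologyModule I 0 A →ₗ[R] A :=
  Module.DirectLimit.lift R ℕ _ _ (evalOne I A) (by
    intro t s h α
    obtain ⟨f, rfl⟩ := (Abelian.Ext.mk₀_bijective _ _).2 α
    rw [extTransition_apply, Abelian.Ext.mk₀_comp_mk₀, evalOne_mk₀, evalOne_mk₀]
    rfl)

lemma eval_of (t : ℕ) (α : Abelian.Ext.{u} (quotPow I t) (ModuleCat.of R A) 0) :
    eval I A (of I 0 A t α) = evalOne I A t α :=
  Module.DirectLimit.lift_of _ _ _

lemma eval_injective : Function.Injective (eval I A) := by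
  rw [injective_iff_map_eq_zero]
  intro z hz
  obtain ⟨t, α, rfl⟩ := exists_of z
  rw [eval_of] at hz
  rw [(map_eq_zero_iff _ (evalOne_injective t)).1 hz, map_zero]

lemma range_eval : LinearMap.range (eval I A) = powTorsion I A := by
  refine le_antisymm ?_ fun a ha => ?_
  · rintro _ ⟨z, rfl⟩
    exact map_mem_powTorsion (eval I A) (powTorsion_eq_top.ge Submodule.mem_top)
  · obtain ⟨t, ht⟩ := mem_powTorsion.1 ha
    let φ : quotPow I t ⟶ ModuleCat.of R A :=
      ModuleCat.ofHom (Submodule.liftQ (I ^ t) (LinearMap.toSpanSingleton R A a) ht)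
    refine ⟨of I 0 A t (Abelian.Ext.mk₀ φ), ?_⟩
    rw [eval_of, evalOne_mk₀]
    exact one_smul R a

lemma eval_map (f : A →ₗ[R] B) (z : LocalCohomologyModule I 0 A) :
    eval I B (map I 0 f z) = f (eval I A z) := by
  obtain ⟨t, α, rfl⟩ := exists_of z
  obtain ⟨g, rfl⟩ := (Abelian.Ext.mk₀_bijective _ _).2 α
  rw [map, postcomp_of, Abelian.Ext.mk₀_comp_mk₀, eval_of, eval_of, evalOne_mk₀, evalOne_mk₀]
  rfl

lemma map_zero_surjective_iff {f : A →ₗ[R] B} :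
    Function.Surjective (map I 0 f) ↔ ∀ b ∈ powTorsion I B, ∃ a ∈ powTorsion I A, f a = b := by
  simp only [← range_eval, LinearMap.mem_range, exists_exists_eq_and, forall_exists_index,
    forall_apply_eq_imp_iff, ← eval_map, eval_injective.eq_iff]
  rfl

end LocalCohomologyModule
end DegreeZero

section DimensionShifting

variable {R : Type u} [CommRing R]

lemma exists_injective_shortExact (A : Type u) [AddCommGroup A] [Module R A] :
    ∃ (E C : Type u) (_ : AddCommGroup E) (_ : Module R E) (_ : AddCommGroup C) (_ : Module R C)
      (f : A →ₗ[R] E) (g : E →ₗ[R] C), Module.Injective R E ∧ Function.Injective f ∧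
        Function.Exact f g ∧ Function.Surjective g := by
  let J : ModuleCat.{u} R := CategoryTheory.Injective.under (ModuleCat.of R A)
  let f : A →ₗ[R] J := (CategoryTheory.Injective.ι (ModuleCat.of R A)).hom
  have hJ : CategoryTheory.Injective (ModuleCat.of R J) :=
    inferInstanceAs (CategoryTheory.Injective (CategoryTheory.Injective.under _))
  exact ⟨_, _, _, _, _, _, f, (LinearMap.range f).mkQ,
    Module.injective_module_of_injective_object R J, (ModuleCat.mono_iff_injective _).1
      inferInstance, LinearMap.exact_map_mkQ_range f, Submodule.mkQ_surjective _⟩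

namespace LocalCohomologyModule

variable {I : Ideal R} {A E C : Type u} [AddCommGroup A] [Module R A] [AddCommGroup E] [Module R E]
  [AddCommGroup C] [Module R C] [Module.Injective R E] {f : A →ₗ[R] E} {g : E →ₗ[R] C}

lemma subsingleton_one_iff (hf : Function.Injective f) (hfg : Function.Exact f g)
    (hg : Function.Surjective g) : Subsingleton (LocalCohomologyModule I 1 A) ↔
      ∀ c ∈ powTorsion I C, ∃ b ∈ powTorsion I E, g b = c := by
  have : Subsingleton (LocalCohomologyModule I 1 E) := subsingleton_of_injective
  have hδ : Function.Surjective (δ I 0 hf hfg hg) := fun z =>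
    (exact_δ_map hf hfg hg z).1 (Subsingleton.elim _ _)
  have hmap := exact_map_δ (I := I) (i := 0) hf hfg hg
  rw [← map_zero_surjective_iff]
  refine ⟨fun _ z => (hmap z).1 (Subsingleton.elim _ _), fun h => ?_⟩
  refine subsingleton_of_forall_eq 0 fun z => ?_
  obtain ⟨y, rfl⟩ := hδ z
  exact (hmap y).2 (h y)

lemma subsingleton_add_two_iff (hf : Function.Injective f) (hfg : Function.Exact f g)
    (hg : Function.Surjective g) (i : ℕ) :
    Subsingleton (LocalCohomologyModule I (i + 2) A) ↔
      Subsingleton (LocalCohomologyModule I (i + 1) C) := by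
  have : Subsingleton (LocalCohomologyModule I (i + 1) E) := subsingleton_of_injective
  have : Subsingleton (LocalCohomologyModule I (i + 2) E) := subsingleton_of_injective
  have hδ : Function.Bijective (δ I (i + 1) hf hfg hg) := by
    refine ⟨(injective_iff_map_eq_zero _).2 fun y hy => ?_, fun z =>
      (exact_δ_map hf hfg hg z).1 (Subsingleton.elim _ _)⟩
    obtain ⟨x, rfl⟩ := (exact_map_δ hf hfg hg y).1 hy
    rw [Subsingleton.elim x 0, map_zero]
  exact (Equiv.ofBijective _ hδ).subsingleton_congr.symm

end LocalCohomologyModule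
end DimensionShifting

section InjectiveModules

variable {R : Type u} [CommRing R] {I : Ideal R}

lemma exists_comap_pow_smul_top_le_ker [IsNoetherianRing R] {N M : Type*} [AddCommGroup N]
    [Module R N] [Module.Finite R N] [AddCommGroup M] [Module R M] {P : Submodule R N}
    (f : P →ₗ[R] M) (hf : ∀ x, f x ∈ powTorsion I M) :
    ∃ n : ℕ, (I ^ n • ⊤ : Submodule R N).comap P.subtype ≤ LinearMap.ker f := by
  have hrange : powTorsion I (LinearMap.range f) = ⊤ :=
    powTorsion_eq_top_of_le (LinearMap.range_le_iff_comap.2 (Submodule.eq_top_iff'.2 hf))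
  obtain ⟨k, hk⟩ := exists_pow_le_annihilator hrange
  have hker : I ^ k • (⊤ : Submodule R P) ≤ LinearMap.ker f := by
    refine Submodule.smul_le.2 fun r hr x _ => ?_
    rw [LinearMap.mem_ker, map_smul]
    exact congrArg Subtype.val
      (Module.mem_annihilator.1 (hk hr) ⟨f x, LinearMap.mem_range_self f x⟩)
  obtain ⟨c, hc⟩ := I.exists_pow_inf_eq_pow_smul P
  have hle : I ^ (c + k) • ⊤ ⊓ P ≤ (I ^ k • (⊤ : Submodule R P)).map P.subtype := by
    rw [hc _ (Nat.le_add_right c k), Nat.add_sub_cancel_left, Submodule.map_smul'',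
      Submodule.map_subtype_top]
    exact Submodule.smul_mono le_rfl inf_le_right
  refine ⟨c + k, fun x hx => hker ?_⟩
  obtain ⟨y, hy, hyx⟩ := hle ⟨hx, x.2⟩
  exact Subtype.ext hyx ▸ hy

lemma exists_quotient_extension {N E : Type u} [AddCommGroup N] [Module R N] [AddCommGroup E]
    [Module R E] [Module.Injective R E] {P K : Submodule R N} (f : P →ₗ[R] E)
    (hf : K.comap P.subtype ≤ LinearMap.ker f) :
    ∃ g : (N ⧸ K) →ₗ[R] E, ∀ x : P, g (K.mkQ x) = f x := by
  let φ : (P ⧸ K.comap P.subtype) →ₗ[R] N ⧸ K := Submodule.mapQ _ K P.subtype le_rfl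
  have hφ : Function.Injective φ := by
    rw [← LinearMap.ker_eq_bot, Submodule.ker_mapQ]
    exact Submodule.mkQ_map_self _
  obtain ⟨g, hg⟩ := Module.Injective.out φ hφ ((K.comap P.subtype).liftQ f hf)
  exact ⟨g, fun x => hg (Submodule.mkQ _ x)⟩

/-- The Artin–Rees lemma factors a homomorphism from an ideal `J` to `Γ_I(E)` through
`J ⧸ (J ⊓ I ^ n)`, and the extension of the factored map to `R ⧸ I ^ n` has torsion image. -/
lemma injective_powTorsion [IsNoetherianRing R] (I : Ideal R) (E : Type u) [AddCommGroup E]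
    [Module R E] [Module.Injective R E] : Module.Injective R (powTorsion I E) := by
  refine Module.Baer.injective fun J f => ?_
  obtain ⟨n, hn⟩ := exists_comap_pow_smul_top_le_ker ((powTorsion I E).subtype ∘ₗ f)
    fun x => (f x).2
  rw [smul_eq_mul, Ideal.mul_top] at hn
  obtain ⟨g, hg⟩ := exists_quotient_extension _ hn
  have htorsion : powTorsion I (R ⧸ I ^ n) = ⊤ := by
    refine Submodule.eq_top_iff'.2 fun c => mem_powTorsion.2 ⟨n, fun r hr => ?_⟩
    obtain ⟨x, rfl⟩ := Ideal.Quotient.mk_surjective c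
    exact Ideal.Quotient.eq_zero_iff_mem.2 (Ideal.mul_mem_right x _ hr)
  have hmem (x : R) : (g ∘ₗ (I ^ n).mkQ) x ∈ powTorsion I E :=
    map_mem_powTorsion g (htorsion.ge Submodule.mem_top)
  exact ⟨(g ∘ₗ (I ^ n).mkQ).codRestrict _ hmem, fun x hx => Subtype.ext (hg ⟨x, hx⟩)⟩

lemma exists_injective_shortExact_of_powTorsion_eq_top [IsNoetherianRing R] {A : Type u}
    [AddCommGroup A] [Module R A] (hA : powTorsion I A = ⊤) :
    ∃ (E C : Type u) (_ : AddCommGroup E) (_ : Module R E) (_ : AddCommGroup C) (_ : Module R C)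
      (f : A →ₗ[R] E) (g : E →ₗ[R] C), Module.Injective R E ∧ powTorsion I E = ⊤ ∧
        Function.Injective f ∧ Function.Exact f g ∧ Function.Surjective g := by
  obtain ⟨E, _, _, _, _, _, f, _, _, hf, -, -⟩ := exists_injective_shortExact (R := R) A
  let f' : A →ₗ[R] powTorsion I E :=
    f.codRestrict _ fun a => map_mem_powTorsion f (hA.ge Submodule.mem_top)
  exact ⟨_, _, _, _, _, _, f', (LinearMap.range f').mkQ, injective_powTorsion I E,
    powTorsion_eq_top_of_le le_rfl, fun a b hab => hf (congrArg Subtype.val hab),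
    LinearMap.exact_map_mkQ_range f', Submodule.mkQ_surjective _⟩

namespace LocalCohomologyModule

lemma subsingleton_of_powTorsion_eq_top [IsNoetherianRing R] (i : ℕ) {A : Type u}
    [AddCommGroup A] [Module R A] (hA : powTorsion I A = ⊤) :
    Subsingleton (LocalCohomologyModule I (i + 1) A) := by
  induction i using Nat.strongRec generalizing A with
  | ind i ih =>
    obtain ⟨E, C, _, _, _, _, f, g, _, hE, hf, hfg, hg⟩ :=
      exists_injective_shortExact_of_powTorsion_eq_top hA
    rcases i with _ | i
    · refine (subsingleton_one_iff hf hfg hg).2 fun c _ => ?_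
      obtain ⟨b, rfl⟩ := hg c
      exact ⟨b, hE.ge Submodule.mem_top, rfl⟩
    · exact (subsingleton_add_two_iff hf hfg hg i).2
        (ih i i.lt_succ_self (powTorsion_eq_top_of_surjective hE hg))

end LocalCohomologyModule

variable {E : Type u} [AddCommGroup E] [Module R E] [Module.Injective R E]

lemma exists_smul_eq_of_forall_smul_eq_zero {a : R} {w : E} (h : ∀ r, r * a = 0 → r • w = 0) :
    ∃ w' : E, a • w' = w := by
  let s := LinearMap.toSpanSingleton R R a
  let φ : (R ⧸ LinearMap.ker s) →ₗ[R] R := (LinearMap.ker s).liftQ s le_rfl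
  have hφ : Function.Injective φ := LinearMap.ker_eq_bot.1 (Submodule.ker_liftQ_eq_bot' _ s rfl)
  obtain ⟨g, hg⟩ := Module.Injective.out φ hφ
    ((LinearMap.ker s).liftQ (LinearMap.toSpanSingleton R E w) h)
  refine ⟨g 1, ?_⟩
  calc a • g 1 = g (φ ((LinearMap.ker s).mkQ 1)) := by
        rw [← map_smul]
        exact congrArg g ((mul_comm a 1).trans ((LinearMap.ker s).liftQ_apply s 1).symm)
    _ = (1 : R) • w := hg _
    _ = w := one_smul R w

lemma exists_pow_add_smul_eq [IsNoetherianRing R] (x : R) (k : ℕ) (w : E) :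
    ∃ (w' : E) (l : ℕ), x ^ (k + l) • w' = x ^ l • w := by
  let ann : ℕ →o Ideal R := ⟨fun l => Submodule.torsionBy R R (x ^ l), fun _ _ hlm =>
    Submodule.torsionBy_le_torsionBy_of_dvd _ _ (pow_dvd_pow x hlm)⟩
  obtain ⟨l, hl⟩ := monotone_stabilizes_iff_noetherian.2 ‹_› ann
  have hann (r : R) (hr : r * x ^ (k + l) = 0) : r • x ^ l • w = 0 := by
    have hr' : r ∈ ann l := by
      rw [hl (k + l) (Nat.le_add_left l k)]
      exact (Submodule.mem_torsionBy_iff _ _).2 (by rwa [smul_eq_mul, mul_comm])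
    rw [smul_smul, mul_comm, ← smul_eq_mul, (Submodule.mem_torsionBy_iff _ _).1 hr', zero_smul]
  obtain ⟨w', hw'⟩ := exists_smul_eq_of_forall_smul_eq_zero hann
  exact ⟨w', l, hw'⟩

end InjectiveModules

section AddGenerator

variable {R : Type u} [CommRing R] {I J : Ideal R} {x : R}

section PowTorsion

variable {A : Type*} [AddCommGroup A] [Module R A]

lemma powTorsion_le_of_le_radical (hJ : J.FG) (hJI : J ≤ I.radical) :
    powTorsion I A ≤ powTorsion J A := by
  obtain ⟨l, hl⟩ := Ideal.exists_pow_le_of_le_radical_of_fg hJI hJ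
  intro a ha
  obtain ⟨t, ht⟩ := mem_powTorsion.1 ha
  exact mem_powTorsion.2
    ⟨l * t, fun r hr => ht r (Ideal.pow_right_mono hl t (pow_mul J l t ▸ hr))⟩

lemma mem_powTorsion_sup_span {a : A} :
    a ∈ powTorsion (I ⊔ Ideal.span {x}) A ↔ a ∈ powTorsion I A ∧ ∃ k, x ^ k • a = 0 := by
  simp only [mem_powTorsion]
  constructor
  · rintro ⟨t, ht⟩
    refine ⟨⟨t, fun r hr => ht r (Ideal.pow_right_mono le_sup_left t hr)⟩, t, ht _ ?_⟩
    exact Ideal.pow_mem_pow (Ideal.mem_sup_right (Ideal.mem_span_singleton_self x)) t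
  · rintro ⟨⟨t, ht⟩, k, hk⟩
    refine ⟨t + k, fun r hr => ?_⟩
    obtain ⟨y, hy, z, hz, rfl⟩ := Submodule.mem_sup.1 (Ideal.sup_pow_add_le_pow_sup_pow hr)
    rw [Ideal.span_singleton_pow, Ideal.mem_span_singleton'] at hz
    obtain ⟨c, rfl⟩ := hz
    rw [add_smul, ht y hy, mul_smul, hk, smul_zero, add_zero]

lemma exists_sub_mem_powTorsion_sup_span [IsNoetherianRing R] {E : Type u} [AddCommGroup E]
    [Module R E] [Module.Injective R E] (d : E →ₗ[R] A) {a : A} (ha : a ∈ powTorsion I A) {w : E}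
    (hw : w ∈ powTorsion I E) {k : ℕ} (hdw : d w = x ^ k • a) :
    ∃ w', a - d w' ∈ powTorsion (I ⊔ Ideal.span {x}) A := by
  have := injective_powTorsion I E
  obtain ⟨⟨w', hw'⟩, l, hwl⟩ := exists_pow_add_smul_eq x k (⟨w, hw⟩ : powTorsion I E)
  have hwl : x ^ (k + l) • w' = x ^ l • w := congrArg Subtype.val hwl
  refine ⟨w', mem_powTorsion_sup_span.2
    ⟨Submodule.sub_mem _ ha (map_mem_powTorsion d hw'), k + l, ?_⟩⟩
  rw [smul_sub, ← map_smul, hwl, map_smul, hdw, smul_smul, ← pow_add, add_comm, sub_self]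

end PowTorsion

namespace LocalCohomologyModule

variable {A : Type u} [AddCommGroup A] [Module R A]

lemma subsingleton_succ_congr
    (h : ∀ (E : Type u) [AddCommGroup E] [Module R E], powTorsion I E = powTorsion J E) (i : ℕ) :
    Subsingleton (LocalCohomologyModule I (i + 1) A) ↔
      Subsingleton (LocalCohomologyModule J (i + 1) A) := by
  induction i using Nat.strongRec generalizing A with
  | ind i ih =>
    obtain ⟨E, C, _, _, _, _, f, g, _, hf, hfg, hg⟩ := exists_injective_shortExact (R := R) A
    rcases i with _ | i
    · rw [subsingleton_one_iff hf hfg hg, subsingleton_one_iff hf hfg hg, h, h]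
    · rw [subsingleton_add_two_iff hf hfg hg, subsingleton_add_two_iff hf hfg hg,
        ih i i.lt_succ_self]

lemma subsingleton_two_sup_span [IsNoetherianRing R]
    (h1 : Subsingleton (LocalCohomologyModule I 1 A))
    (h2 : Subsingleton (LocalCohomologyModule I 2 A)) :
    Subsingleton (LocalCohomologyModule (I ⊔ Ideal.span {x}) 2 A) := by
  obtain ⟨E, C, _, _, _, _, f, g, _, hf, hfg, hg⟩ := exists_injective_shortExact (R := R) A
  obtain ⟨E', C', _, _, _, _, f', g', _, hf', hfg', hg'⟩ := exists_injective_shortExact (R := R) C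
  rw [subsingleton_one_iff hf hfg hg] at h1
  rw [subsingleton_add_two_iff hf hfg hg, subsingleton_one_iff hf' hfg' hg'] at h2 ⊢
  intro z hz
  obtain ⟨hzI, k, hk⟩ := mem_powTorsion_sup_span.1 hz
  obtain ⟨y, hy, rfl⟩ := h2 z hzI
  rw [← map_smul] at hk
  obtain ⟨v, hv⟩ := (hfg' _).1 hk
  have hvI : v ∈ powTorsion I C :=
    (map_mem_powTorsion_iff hf').1 (hv ▸ Submodule.smul_mem _ _ hy)
  obtain ⟨w, hw, rfl⟩ := h1 v hvI
  obtain ⟨w', hw'⟩ := exists_sub_mem_powTorsion_sup_span (f' ∘ₗ g) hy hw hv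
  refine ⟨_, hw', ?_⟩
  rw [map_sub, sub_eq_self]
  exact hfg'.apply_apply_eq_zero _

lemma subsingleton_add_two_sup_span [IsNoetherianRing R] (i : ℕ)
    (h1 : Subsingleton (LocalCohomologyModule I (i + 1) A))
    (h2 : Subsingleton (LocalCohomologyModule I (i + 2) A)) :
    Subsingleton (LocalCohomologyModule (I ⊔ Ideal.span {x}) (i + 2) A) := by
  induction i generalizing A with
  | zero => exact subsingleton_two_sup_span h1 h2
  | succ i ih =>
    obtain ⟨E, C, _, _, _, _, f, g, _, hf, hfg, hg⟩ := exists_injective_shortExact (R := R) A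
    rw [subsingleton_add_two_iff hf hfg hg] at h1 h2 ⊢
    exact ih h1 h2

lemma subsingleton_sup_span_finset [IsNoetherianRing R] (S : Finset R) {c : ℕ}
    (h : ∀ i, c < i → Subsingleton (LocalCohomologyModule I i A)) :
    ∀ i, c + S.card < i →
      Subsingleton (LocalCohomologyModule (I ⊔ Ideal.span (S : Set R)) i A) := by
  classical
  induction S using Finset.induction_on with
  | empty => simpa using h
  | insert x S hx ih =>
    intro i hi
    rw [Finset.card_insert_of_notMem hx] at hi
    obtain ⟨j, rfl⟩ : ∃ j, i = j + 2 := ⟨i - 2, by lia⟩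
    rw [Finset.coe_insert, Ideal.span_insert, sup_comm (Ideal.span {x}), ← sup_assoc]
    exact subsingleton_add_two_sup_span j (ih _ (by lia)) (ih _ (by lia))

end LocalCohomologyModule
end AddGenerator

section Comparison

open Limits

section Homology

variable {D : Type*} [Category* D] [Abelian D] {K L : ChainComplex D ℕ}

/-- The morphism out of the homology in degree `n` induced by a morphism `K.X n ⟶ A` vanishing on
boundaries. -/
noncomputable def homologyDesc (K : ChainComplex D ℕ) {A : D} (n : ℕ) (k : K.X n ⟶ A)
    (hk : K.d (n + 1) n ≫ k = 0) : K.homology n ⟶ A :=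
  K.homologyι n ≫ K.descOpcycles k (n + 1) (by simp) hk

lemma homologyMap_homologyDesc (φ : K ⟶ L) {A : D} (n : ℕ) (k : L.X n ⟶ A)
    (hk : L.d (n + 1) n ≫ k = 0) :
    HomologicalComplex.homologyMap φ n ≫ homologyDesc L n k hk =
      homologyDesc K n (φ.f n ≫ k) (by rw [← φ.comm_assoc, hk, comp_zero]) := by
  rw [homologyDesc, homologyDesc, HomologicalComplex.homologyι_naturality_assoc,
    HomologicalComplex.opcyclesMap_comp_descOpcycles]

lemma exists_d_comp_eq_of_homologyDesc_eq_zero {A : D} [Injective A] (n : ℕ) (k : K.X (n + 1) ⟶ A)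
    (hk : K.d (n + 2) (n + 1) ≫ k = 0) (h : homologyDesc K (n + 1) k hk = 0) :
    ∃ l : K.X n ⟶ A, K.d (n + 1) n ≫ l = k := by
  let S := ShortComplex.mk _ _ (K.homologyι_comp_fromOpcycles (n + 1) n)
  have hS : S.Exact := S.exact_of_f_is_kernel (K.homologyIsKernel (n + 1) n (by simp))
  have hdesc : K.fromOpcycles (n + 1) n ≫ hS.descToInjective _ h = K.descOpcycles k _ _ hk :=
    hS.comp_descToInjective _ h
  exact ⟨hS.descToInjective _ h, by
    rw [← K.p_fromOpcycles, Category.assoc, hdesc, HomologicalComplex.p_descOpcycles]⟩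

end Homology

section LeftDerived

variable {C D : Type*} [Category* C] [Abelian C] [EnoughProjectives C] [Category* D] [Abelian D]
  (F : C ⥤ D) [F.Additive] {X X' : C} (P : ProjectiveResolution X) (P' : ProjectiveResolution X')

/-- The morphism out of a left derived functor induced by a morphism `F.obj (P.complex.X n) ⟶ A`
vanishing on boundaries, for a projective resolution `P`. -/
noncomputable def leftDerivedDesc (n : ℕ) {A : D} (k : F.obj (P.complex.X n) ⟶ A)
    (hk : F.map (P.complex.d (n + 1) n) ≫ k = 0) : (F.leftDerived n).obj X ⟶ A :=
  (P.isoLeftDerivedObj F n).hom ≫ homologyDesc ((F.mapHomologicalComplex _).obj P.complex) n k hk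

variable {P P'} in
lemma leftDerived_map_leftDerivedDesc {g : X' ⟶ X} (φ : ProjectiveResolution.Hom P' P g) (n : ℕ)
    {A : D} (k : F.obj (P.complex.X n) ⟶ A) (hk : F.map (P.complex.d (n + 1) n) ≫ k = 0) :
    (F.leftDerived n).map g ≫ leftDerivedDesc F P n k hk =
      leftDerivedDesc F P' n (F.map (φ.hom.f n) ≫ k)
        (by rw [← F.map_comp_assoc, ← φ.hom.comm, F.map_comp_assoc, hk, comp_zero]) := by
  have hnat := ProjectiveResolution.isoLeftDerivedObj_hom_naturality g P' P φ.hom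
    (by simpa using! φ.hom_f_zero_comp_π_f_zero) F n
  refine ((reassoc_of% hnat)
    (homologyDesc ((F.mapHomologicalComplex _).obj P.complex) n k hk)).trans ?_
  exact congrArg (_ ≫ ·) (homologyMap_homologyDesc _ n _ hk)

lemma exists_map_d_comp_eq_of_leftDerivedDesc_eq_zero (n : ℕ) {A : D} [Injective A]
    (k : F.obj (P.complex.X (n + 1)) ⟶ A) (hk : F.map (P.complex.d (n + 2) (n + 1)) ≫ k = 0)
    (h : leftDerivedDesc F P (n + 1) k hk = 0) :
    ∃ l : F.obj (P.complex.X n) ⟶ A, F.map (P.complex.d (n + 1) n) ≫ l = k :=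
  exists_d_comp_eq_of_homologyDesc_eq_zero (K := (F.mapHomologicalComplex _).obj P.complex) n k hk
    ((cancel_epi (P.isoLeftDerivedObj F (n + 1)).hom).1 (h.trans comp_zero.symm))

end LeftDerived

section Ext

variable {R : Type u} [CommRing R] {C : Type*} [Category.{u} C] [Abelian C] [Linear R C]
  {X X' Y Z Z' : C}

variable (R) in
/-- A morphism `Z ⟶ Y`, seen as a map `R → Hom (Z, Y)` and hence as a morphism in the opposite of
the category of modules, where Mathlib's `Ext` functors take the left derived functors of
`Hom (-, Y)`. -/
noncomputable def homOp (f : Z ⟶ Y) :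
    ((linearYoneda R C).obj Y).rightOp.obj Z ⟶ op (ModuleCat.of R R) :=
  Quiver.Hom.op (ModuleCat.ofHom (LinearMap.toSpanSingleton R (Z ⟶ Y) f))

lemma homOp_unop_one (f : Z ⟶ Y) : (homOp R f).unop.hom (1 : R) = f :=
  one_smul R f

lemma homOp_bijective : Function.Bijective (homOp R : (Z ⟶ Y) → _) := by
  refine ⟨fun f g h => ?_, fun k => ⟨k.unop.hom (1 : R), Quiver.Hom.unop_inj ?_⟩⟩
  · rw [← homOp_unop_one (R := R) f, h, homOp_unop_one]
  · ext : 1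
    exact LinearMap.ext_ring (one_smul R _)

lemma map_homOp (g : Z' ⟶ Z) (f : Z ⟶ Y) :
    ((linearYoneda R C).obj Y).rightOp.map g ≫ homOp R f = homOp R (g ≫ f) := by
  apply Quiver.Hom.unop_inj
  ext : 1
  refine LinearMap.ext_ring ?_
  change g ≫ ((1 : R) • f) = (1 : R) • (g ≫ f)
  rw [one_smul, one_smul]

lemma map_homOp_eq_zero {g : Z' ⟶ Z} {f : Z ⟶ Y} (h : g ≫ f = 0) :
    ((linearYoneda R C).obj Y).rightOp.map g ≫ homOp R f = 0 := by
  rw [map_homOp, h]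
  apply Quiver.Hom.unop_inj
  ext : 1
  exact LinearMap.ext_ring (one_smul R _)

variable [EnoughProjectives C] (P : ProjectiveResolution X) (P' : ProjectiveResolution X')

variable (R) in
/-- The class in `Ext R C n` of a cocycle, as a morphism from `R`. -/
noncomputable def derivedExtMk (n : ℕ) (f : P.complex.X n ⟶ Y)
    (hf : P.complex.d (n + 1) n ≫ f = 0) :
    ModuleCat.of R R ⟶ ((Ext R C n).obj (op X)).obj Y :=
  Quiver.Hom.unop (leftDerivedDesc ((linearYoneda R C).obj Y).rightOp P n (homOp R f)
    (map_homOp_eq_zero hf))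

variable {P P'} in
lemma derivedExtMk_comp_map {g : X' ⟶ X} (φ : ProjectiveResolution.Hom P' P g) (n : ℕ)
    (f : P.complex.X n ⟶ Y) (hf : P.complex.d (n + 1) n ≫ f = 0) :
    derivedExtMk R P n f hf ≫ ((Ext R C n).map g.op).app Y =
      derivedExtMk R P' n (φ.hom.f n ≫ f) (by rw [← φ.hom.comm_assoc, hf, comp_zero]) := by
  apply Quiver.Hom.op_inj
  refine (leftDerived_map_leftDerivedDesc ((linearYoneda R C).obj Y).rightOp φ n (homOp R f)
    (map_homOp_eq_zero hf)).trans ?_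
  simp only [map_homOp]
  rfl

lemma exists_d_comp_eq_of_derivedExtMk_eq_zero (n : ℕ) (f : P.complex.X (n + 1) ⟶ Y)
    (hf : P.complex.d (n + 2) (n + 1) ≫ f = 0) (h : derivedExtMk R P (n + 1) f hf = 0) :
    ∃ g : P.complex.X n ⟶ Y, P.complex.d (n + 1) n ≫ g = f := by
  obtain ⟨l, hl⟩ := exists_map_d_comp_eq_of_leftDerivedDesc_eq_zero _ _ _ _
    (map_homOp_eq_zero hf) (congrArg Quiver.Hom.op h)
  obtain ⟨g, rfl⟩ := homOp_bijective.2 l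
  exact ⟨g, homOp_bijective.1 (by rw [← hl, ← map_homOp])⟩

variable (R) in
lemma exists_derivedExt_forall_mk₀_comp_eq_zero [HasExt.{u} C] {n : ℕ}
    (α : Abelian.Ext.{u} X Y (n + 1)) :
    ∃ x : ((Ext R C (n + 1)).obj (op X)).obj Y, ∀ {X' : C} (g : X' ⟶ X),
      ((Ext R C (n + 1)).map g.op).app Y x = 0 → (Abelian.Ext.mk₀ g).comp α (zero_add _) = 0 := by
  let P := projectiveResolution X
  obtain ⟨f, hf, rfl⟩ := P.extMk_surjective α (n + 2) rfl
  refine ⟨(derivedExtMk R P (n + 1) f hf).hom (1 : R), fun {X'} g hg => ?_⟩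
  let P' := projectiveResolution X'
  let φ : ProjectiveResolution.Hom P' P g :=
    { hom := ProjectiveResolution.lift _ _ _
      hom_f_zero_comp_π_f_zero := by
        simpa using! ProjectiveResolution.lift_commutes_zero g P' P }
  have hφf : derivedExtMk R P' (n + 1) (φ.hom.f (n + 1) ≫ f)
      (by rw [← φ.hom.comm_assoc, hf, comp_zero]) = 0 := by
    rw [← derivedExtMk_comp_map φ _ _ hf]
    ext : 1
    exact LinearMap.ext_ring hg
  rw [ProjectiveResolution.mk₀_comp_extMk _ _ _ _ φ,
    ProjectiveResolution.extMk_eq_zero_iff _ _ _ _ _ n rfl]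
  exact exists_d_comp_eq_of_derivedExtMk_eq_zero P' n _ _ hφf

end Ext

lemma LocalCohomologyModule.subsingleton_of_localCohomology {R : Type u} [CommRing R] {I : Ideal R}
    {i : ℕ} {A : Type u} [AddCommGroup A] [Module R A]
    (h : Subsingleton ((localCohomology I (i + 1)).obj (ModuleCat.of R A))) :
    Subsingleton (LocalCohomologyModule I (i + 1) A) := by
  refine subsingleton_of_forall_eq 0 fun z => ?_
  obtain ⟨t, α, rfl⟩ := exists_of z
  obtain ⟨x, hx⟩ := exists_derivedExt_forall_mk₀_comp_eq_zero R α
  have := localCohomology.hasColimitDiagram.{u, 0} (localCohomology.idealPowersDiagram I) (i + 1)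
  let D := localCohomology.diagram (localCohomology.idealPowersDiagram I) (i + 1)
  let hD := isColimitOfPreserves ((evaluation _ _).obj (ModuleCat.of R A)) (colimit.isColimit D)
  have : PreservesFilteredColimitsOfSize.{0, 0} (forget (ModuleCat.{u} R)) :=
    preservesFilteredColimitsOfSize_shrink.{0, u, 0, u} _
  obtain ⟨⟨⟨s⟩⟩, a, b, hab⟩ := Concrete.isColimit_exists_of_rep_eq
    (D ⋙ (evaluation _ _).obj (ModuleCat.of R A)) hD (i := op (op t)) (j := op (op t)) x 0
      (Subsingleton.elim (α := (localCohomology I (i + 1)).obj (ModuleCat.of R A)) _ _)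
  have hts : t ≤ s := leOfHom a.unop.unop
  rw [← of_extTransition hts, extTransition_apply, hx (quotPowMap I hts) (hab.trans (map_zero _)),
    map_zero]

end Comparison

section Vanishing

variable {R : Type u} [CommRing R] {I : Ideal R} {x : R}

lemma subsingleton_of_powTorsion_eq_top_of_isSMulRegular {A : Type*} [AddCommGroup A] [Module R A]
    (hA : powTorsion I A = ⊤) (hx : x ∈ I) (hreg : IsSMulRegular A x) : Subsingleton A := by
  refine subsingleton_of_forall_eq 0 fun a => ?_
  obtain ⟨t, ht⟩ := mem_powTorsion.1 (hA.ge (Submodule.mem_top (x := a)))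
  exact (hreg.pow t).right_eq_zero_of_smul (ht _ (Ideal.pow_mem_pow hx t))

lemma exists_mem_isSMulRegular_of_powTorsion_eq_bot [IsNoetherianRing R] {A : Type*}
    [AddCommGroup A] [Module R A] [Module.Finite R A] (hA : powTorsion I A = ⊥) :
    ∃ x ∈ I, IsSMulRegular A x := by
  have hhom : Subsingleton (R ⧸ I →ₗ[R] A) := by
    refine subsingleton_of_forall_eq 0 fun f => LinearMap.ext fun b => ?_
    refine (Submodule.mem_bot R).1 (hA.le (mem_powTorsion.2 ⟨1, fun r hr => ?_⟩))
    rw [pow_one, ← Ideal.annihilator_quotient (I := I)] at hr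
    rw [← map_smul, Module.mem_annihilator.1 hr, map_zero]
  simpa only [Ideal.annihilator_quotient] using IsSMulRegular.subsingleton_linearMap_iff.1 hhom

namespace LocalCohomologyModule

variable {i : ℕ} {A : Type u} [AddCommGroup A] [Module R A]

lemma smul_eq_zero_of_mem_annihilator {r : R} (hr : r ∈ Module.annihilator R A)
    (z : LocalCohomologyModule I i A) : r • z = 0 := by
  have hlsmul : LinearMap.lsmul R A r = LinearMap.lsmul R A 0 :=
    LinearMap.ext fun a => (Module.mem_annihilator.1 hr a).trans (zero_smul R a).symm
  rw [← map_lsmul, hlsmul, map_lsmul, zero_smul]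

lemma subsingleton_of_subsingleton [Subsingleton A] :
    Subsingleton (LocalCohomologyModule I i A) := by
  refine subsingleton_of_forall_eq 0 fun z => ?_
  rw [← one_smul R z, smul_eq_zero_of_mem_annihilator]
  exact Module.mem_annihilator.2 fun a => Subsingleton.elim _ _

lemma map_mkQ_powTorsion_injective [IsNoetherianRing R] :
    Function.Injective (map I (i + 1) (powTorsion I A).mkQ) := by
  have hexact := exact_map_map (I := I) (i := i + 1) (powTorsion I A).injective_subtype
    (LinearMap.exact_subtype_mkQ _) (powTorsion I A).mkQ_surjective
  have hzero := subsingleton_of_powTorsion_eq_top i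
    (powTorsion_eq_top_of_le (le_refl (powTorsion I A)))
  refine (injective_iff_map_eq_zero _).2 fun z hz => ?_
  obtain ⟨w, rfl⟩ := (hexact z).1 hz
  rw [Subsingleton.elim w 0, map_zero]

lemma torsionBy_eq_range_δ (hx : IsSMulRegular A x) :
    Submodule.torsionBy R (LocalCohomologyModule I (i + 1) A) x =
      LinearMap.range (δ I i (f := LinearMap.lsmul R A x) hx
        (LinearMap.exact_lsmul_mkQ_smul_top A x) (Submodule.mkQ_surjective _)) := by
  ext z
  rw [Submodule.mem_torsionBy_iff, ← map_lsmul]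
  exact exact_δ_map _ _ _ z

lemma isSMulRegular_succ (hx : IsSMulRegular A x)
    (h : Subsingleton (LocalCohomologyModule I i (QuotSMulTop x A))) :
    IsSMulRegular (LocalCohomologyModule I (i + 1) A) x := by
  refine isSMulRegular_iff_right_eq_zero_of_smul.2 fun z hz => ?_
  obtain ⟨w, rfl⟩ := (torsionBy_eq_range_δ hx).le hz
  rw [Subsingleton.elim w 0, map_zero]

open IsLocalRing

/-- Grothendieck's vanishing theorem. -/
lemma subsingleton_of_supportDim_lt [IsNoetherianRing R] [IsLocalRing R] [Module.Finite R A]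
    (h : Module.supportDim R A < i) :
    Subsingleton (LocalCohomologyModule (maximalIdeal R) i A) := by
  induction i generalizing A with
  | zero =>
    have := (Module.supportDim_eq_bot_iff_subsingleton R A).1 ((WithBot.lt_zero_iff_eq_bot _).1 h)
    exact subsingleton_of_subsingleton
  | succ i ih =>
    set B := A ⧸ powTorsion (maximalIdeal R) A
    obtain ⟨x, hx, hreg⟩ : ∃ x ∈ maximalIdeal R, IsSMulRegular B x :=
      exists_mem_isSMulRegular_of_powTorsion_eq_bot (powTorsion_quotient_powTorsion _)
    have hdim : Module.supportDim R (QuotSMulTop x B) < i := by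
      rw [← ENat.WithBot.add_one_le_natCast_iff,
        Module.supportDim_quotSMulTop_succ_eq_supportDim hreg hx, ← ENat.WithBot.lt_add_one_iff]
      exact (Module.supportDim_le_of_surjective _ (Submodule.mkQ_surjective _)).trans_lt
        (mod_cast h)
    have := subsingleton_of_powTorsion_eq_top_of_isSMulRegular powTorsion_eq_top hx
      (isSMulRegular_succ hreg (ih hdim))
    exact map_mkQ_powTorsion_injective.subsingleton

end LocalCohomologyModule
end Vanishing

section Artinian

lemma exists_forall_forall_ge_eq_of_antitone {α : Type*} [PartialOrder α] [WellFoundedLT α]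
    {V : ℕ → ℕ → α} (hleft : ∀ j, Antitone (V · j)) (hright : ∀ k, Antitone (V k)) :
    ∃ J, ∀ k, ∀ j ≥ J, V k J = V k j := by
  have hdiag : Antitone fun j => V j j := fun a b hab => (hleft b hab).trans (hright a hab)
  obtain ⟨d, hd⟩ := WellFoundedLT.antitone_chain_condition hdiag
  choose N hN using fun k => WellFoundedLT.antitone_chain_condition (hright k)
  refine ⟨max d ((Finset.range d).sup N), fun k j hj => ?_⟩
  set J := max d ((Finset.range d).sup N)
  refine le_antisymm ?_ (hright k hj)
  rcases lt_or_ge k d with hk | hk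
  · have hkJ : N k ≤ J := (Finset.le_sup (Finset.mem_range.2 hk)).trans (le_max_right _ _)
    rw [← hN k J hkJ, hN k j (hkJ.trans hj)]
  · calc V k J ≤ V d d := (hleft J hk).trans (hright d (le_max_left _ _))
      _ = V (max k j) (max k j) := hd _ (hk.trans (le_max_left _ _))
      _ ≤ V k j := (hleft _ (le_max_left _ _)).trans (hright k (le_max_right _ _))

section Melkersson

variable {R W : Type*} [CommRing R] [AddCommGroup W] [Module R W] {x : R}

/-- The submodule of the elements of `F` multiplied by `x ^ k` which are killed by `x`. When `W` is
`x`-power torsion, these layers, for varying `k`, determine `F` among the submodules comparable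
to it. -/
def torsionLayer (x : R) (k : ℕ) (F : Submodule R W) : Submodule R (Submodule.torsionBy R W x) :=
  (F.map (LinearMap.lsmul R W (x ^ k))).comap (Submodule.torsionBy R W x).subtype

lemma mem_torsionLayer {k : ℕ} {F : Submodule R W} {u : Submodule.torsionBy R W x} :
    u ∈ torsionLayer x k F ↔ ∃ a ∈ F, x ^ k • a = u := Iff.rfl

lemma torsionLayer_mono (k : ℕ) : Monotone (torsionLayer (W := W) x k) :=
  fun _ _ h => Submodule.comap_mono (Submodule.map_mono h)

lemma torsionLayer_antitone (F : Submodule R W) : Antitone (torsionLayer x · F) := by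
  refine antitone_nat_of_succ_le fun k u hu => ?_
  obtain ⟨a, ha, hau⟩ := mem_torsionLayer.1 hu
  exact mem_torsionLayer.2 ⟨x • a, F.smul_mem x ha, by rw [smul_smul, ← pow_succ, hau]⟩

lemma le_of_forall_torsionLayer_le (hW : ∀ w : W, ∃ t : ℕ, x ^ t • w = 0) {F G : Submodule R W}
    (hGF : G ≤ F) (h : ∀ k, torsionLayer x k F ≤ torsionLayer x k G) : F ≤ G := by
  suffices ∀ (t : ℕ), ∀ a ∈ F, x ^ t • a = 0 → a ∈ G from
    fun a ha => (hW a).elim fun t ht => this t a ha ht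
  intro t
  induction t with
  | zero =>
    intro a _ hat
    rw [pow_zero, one_smul] at hat
    exact hat ▸ G.zero_mem
  | succ t ih =>
    intro a ha hat
    have hmem : x ^ t • a ∈ Submodule.torsionBy R W x := by
      rwa [Submodule.mem_torsionBy_iff, smul_smul, ← pow_succ']
    obtain ⟨b, hb, hab⟩ := mem_torsionLayer.1
      (h t (mem_torsionLayer.2 ⟨a, ha, rfl⟩ : ⟨x ^ t • a, hmem⟩ ∈ torsionLayer x t F))
    rw [← sub_add_cancel a b]
    refine G.add_mem (ih _ (F.sub_mem ha (hGF hb)) ?_) hb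
    rw [smul_sub, hab, sub_self]

/-- Melkersson's criterion. -/
lemma isArtinian_of_isArtinian_torsionBy (hW : ∀ w : W, ∃ t : ℕ, x ^ t • w = 0)
    [IsArtinian R (Submodule.torsionBy R W x)] : IsArtinian R W := by
  refine monotone_stabilizes_iff_artinian.1 fun F => ?_
  have hF : Antitone fun j => OrderDual.ofDual (F j) := F.monotone
  obtain ⟨J, hJ⟩ := exists_forall_forall_ge_eq_of_antitone
    (V := fun k j => torsionLayer x k (OrderDual.ofDual (F j)))
    (fun j => torsionLayer_antitone _) (fun k => (torsionLayer_mono k).comp_antitone hF)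
  exact ⟨J, fun j hj => le_antisymm (hF hj)
    (le_of_forall_torsionLayer_le hW (hF hj) fun k => (hJ k j hj).le)⟩

end Melkersson

open IsLocalRing

lemma isArtinian_of_powTorsion_maximalIdeal_eq_top {R A : Type*} [CommRing R] [IsNoetherianRing R]
    [IsLocalRing R] [AddCommGroup A] [Module R A] [Module.Finite R A]
    (hA : powTorsion (maximalIdeal R) A = ⊤) : IsArtinian R A := by
  cases subsingleton_or_nontrivial A
  · infer_instance
  obtain ⟨k, hk⟩ := exists_pow_le_annihilator hA
  set S := R ⧸ Module.annihilator R A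
  have hsurj : Function.Surjective (algebraMap R S) := Ideal.Quotient.mk_surjective
  have : Nontrivial S := Ideal.Quotient.nontrivial_iff.2
    (mt Module.annihilator_eq_top_iff.1 (not_subsingleton A))
  have : IsLocalRing S := .of_surjective' _ hsurj
  have : IsArtinianRing S := by
    rw [isArtinianRing_iff_isNilpotent_maximalIdeal]
    refine ⟨k, ?_⟩
    rw [← map_maximalIdeal_of_surjective _ hsurj, ← Ideal.map_pow, Ideal.zero_eq_bot,
      Ideal.map_eq_bot_iff_le_ker]
    exact hk.trans_eq Ideal.mk_ker.symm
  let := Module.quotientAnnihilator (R := R) (M := A)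
  have : Module.Finite S A := Module.Finite.of_restrictScalars_finite R S A
  exact isArtinian_of_surjective_algebraMap (R := S) hsurj

lemma LocalCohomologyModule.isArtinian {R : Type u} [CommRing R] [IsNoetherianRing R]
    [IsLocalRing R] (i : ℕ) {A : Type u} [AddCommGroup A] [Module R A] [Module.Finite R A] :
    IsArtinian R (LocalCohomologyModule (maximalIdeal R) i A) := by
  induction i generalizing A with
  | zero =>
    have := isArtinian_of_powTorsion_maximalIdeal_eq_top (R := R)
      (powTorsion_eq_top_of_le (le_refl (powTorsion (maximalIdeal R) A)))
    have : IsArtinian R (LinearMap.range (eval (maximalIdeal R) A)) := by rwa [range_eval]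
    exact isArtinian_of_injective _
      (LinearMap.injective_rangeRestrict_iff (eval (maximalIdeal R) A) |>.2 eval_injective)
  | succ i ih =>
    set B := A ⧸ powTorsion (maximalIdeal R) A
    obtain ⟨x, hx, hreg⟩ : ∃ x ∈ maximalIdeal R, IsSMulRegular B x :=
      exists_mem_isSMulRegular_of_powTorsion_eq_bot (powTorsion_quotient_powTorsion _)
    have := ih (A := QuotSMulTop x B)
    have : IsArtinian R
        (Submodule.torsionBy R (LocalCohomologyModule (maximalIdeal R) (i + 1) B) x) := by
      rw [torsionBy_eq_range_δ hreg]
      infer_instance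
    have : IsArtinian R (LocalCohomologyModule (maximalIdeal R) (i + 1) B) := by
      refine isArtinian_of_isArtinian_torsionBy (x := x) fun w => ?_
      obtain ⟨t, ht⟩ := mem_powTorsion.1 (powTorsion_eq_top.ge (Submodule.mem_top (x := w)))
      exact ⟨t, ht _ (Ideal.pow_mem_pow hx t)⟩
    exact isArtinian_of_injective _ map_mkQ_powTorsion_injective

end Artinian

section Nonvanishing

open IsLocalRing

section Parameters

variable {R : Type*} [CommRing R] {M N : Type*} [AddCommGroup M] [Module R M]
  [AddCommGroup N] [Module R N] {x y : R}

lemma supportDim_quotSMulTop_comm [Module.Finite R M] :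
    Module.supportDim R (QuotSMulTop x (QuotSMulTop y M)) =
      Module.supportDim R (QuotSMulTop y (QuotSMulTop x M)) := by
  rw [Module.supportDim, Module.supportDim, Module.support_quotSMulTop, Module.support_quotSMulTop,
    Module.support_quotSMulTop, Module.support_quotSMulTop, Set.inter_right_comm]

variable [IsLocalRing R]

variable (M) in
/-- The element `x` of the maximal ideal is a parameter of `M`, i.e. the first term of a system of
parameters: it avoids the minimal primes of the support of `M`. For a module of positive dimension
it suffices to avoid those of maximal dimension; avoiding all of them makes parameters stable under
products and common to two modules. -/
def IsParameter (x : R) : Prop :=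
  x ∈ maximalIdeal R ∧ ∀ P ∈ (Module.annihilator R M).minimalPrimes, x ∉ P

lemma IsParameter.mul (hx : IsParameter M x) (hy : IsParameter M y) : IsParameter M (x * y) :=
  ⟨Ideal.mul_mem_right _ _ hx.1,
    fun P hP hxy => (hP.1.1.mem_or_mem hxy).elim (hx.2 P hP) (hy.2 P hP)⟩

lemma IsParameter.notMem_annihilator [Nontrivial M] (hx : IsParameter M x) :
    x ∉ Module.annihilator R M := by
  obtain ⟨P, hP⟩ := Ideal.nonempty_minimalPrimes
    (mt (Module.annihilator_eq_top_iff (R := R) (M := M)).1 (not_subsingleton M))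
  exact fun h => hx.2 P hP (hP.1.2 h)

lemma supportDim_nonpos_of_maximalIdeal_le [Module.Finite R M] {P : Ideal R}
    (hP : P ∈ (Module.annihilator R M).minimalPrimes) (hle : maximalIdeal R ≤ P) :
    Module.supportDim R M ≤ 0 := by
  have heq : ∀ q ∈ Module.support R M, q.asIdeal = maximalIdeal R := fun q hq => by
    have hqm := le_maximalIdeal q.2.ne_top
    exact le_antisymm hqm
      (hle.trans (hP.2 ⟨q.2, Module.mem_support_iff_of_finite.1 hq⟩ (hqm.trans hle)))
  have : Subsingleton (Module.support R M) := ⟨fun q q' =>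
    Subtype.ext (PrimeSpectrum.ext ((heq q q.2).trans (heq q' q'.2).symm))⟩
  exact Order.krullDim_nonpos_of_subsingleton

lemma mem_annihilator_of_mem_annihilator_quotSMulTop_mul_self [IsNoetherian R M]
    (hx : x ∈ maximalIdeal R) (h : x ∈ Module.annihilator R (QuotSMulTop (x * x) M)) :
    x ∈ Module.annihilator R M := by
  have hrange : LinearMap.range (LinearMap.lsmul R M x) = ⊥ := by
    refine Submodule.eq_bot_of_le_smul_of_le_jacobson_bot (maximalIdeal R) _
      (IsNoetherian.noetherian _) ?_ (maximalIdeal_le_jacobson _)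
    rintro _ ⟨a, rfl⟩
    obtain ⟨b, hb⟩ := (LinearMap.exact_lsmul_mkQ_smul_top M (x * x) _).1
      (Module.mem_annihilator.1 h (Submodule.Quotient.mk a))
    have hxx : LinearMap.lsmul R M x a = x • x • b := hb.symm.trans (mul_smul x x b)
    exact hxx ▸ Submodule.smul_mem_smul hx ⟨b, rfl⟩
  exact Module.mem_annihilator.2 fun a => (Submodule.mem_bot R).1 (hrange.le ⟨a, rfl⟩)

variable [IsNoetherianRing R] [Module.Finite R M] [Module.Finite R N]

lemma IsParameter.supportDim_quotSMulTop (hx : IsParameter M x) {k : ℕ}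
    (hM : Module.supportDim R M = (k + 1 : ℕ)) :
    Module.supportDim R (QuotSMulTop x M) = k := by
  rw [← ENat.WithBot.add_one_cancel,
    Module.supportDim_quotSMulTop_succ_eq_of_notMem_minimalPrimes_of_mem_maximalIdeal hx.2 hx.1, hM,
    Nat.cast_succ]

lemma exists_isParameter_isParameter (hM : 0 < Module.supportDim R M)
    (hN : 0 < Module.supportDim R N) : ∃ x : R, IsParameter M x ∧ IsParameter N x := by
  by_contra! hc
  have hcover : (maximalIdeal R : Set R) ⊆ ⋃ P ∈ (Module.annihilator R M).minimalPrimes ∪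
      (Module.annihilator R N).minimalPrimes, (P : Set R) := fun x hx => by
    by_contra hx'
    simp only [Set.mem_iUnion, not_exists, Set.mem_union, or_imp, forall_and] at hx'
    exact hc x ⟨hx, hx'.1⟩ ⟨hx, hx'.2⟩
  obtain ⟨P, hP, hle⟩ := (Ideal.subset_union_prime_finite (f := id)
    (((Module.annihilator R M).finite_minimalPrimes_of_isNoetherianRing R).union
      ((Module.annihilator R N).finite_minimalPrimes_of_isNoetherianRing R)) 0 0
    fun _ hP _ _ => hP.elim (fun h => h.1.1) fun h => h.1.1).1 hcover
  exact hP.elim (fun h => (supportDim_nonpos_of_maximalIdeal_le h hle).not_gt hM)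
    fun h => (supportDim_nonpos_of_maximalIdeal_le h hle).not_gt hN

lemma powTorsion_maximalIdeal_eq_top_of_supportDim_nonpos (hM : Module.supportDim R M ≤ 0) :
    powTorsion (maximalIdeal R) M = ⊤ := by
  obtain ⟨x, hx, hreg⟩ := exists_mem_isSMulRegular_of_powTorsion_eq_bot
    (powTorsion_quotient_powTorsion (A := M) (maximalIdeal R))
  have hsucc := Module.supportDim_quotSMulTop_succ_eq_supportDim hreg hx
  have hbot := ENat.WithBot.add_one_le_zero_iff _ |>.1 <| hsucc.trans_le <|
    (Module.supportDim_le_of_surjective _ (powTorsion (maximalIdeal R) M).mkQ_surjective).trans hM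
  rw [hbot, WithBot.bot_add, eq_comm, Module.supportDim_eq_bot_iff_subsingleton] at hsucc
  exact Submodule.Quotient.subsingleton_iff.1 hsucc

end Parameters

lemma exists_mem_forall_exists_smul_smul_eq {R W : Type*} [CommRing R] [AddCommGroup W] [Module R W]
    [IsArtinian R W] {S : Subsemigroup R} (hS : (S : Set R).Nonempty) :
    ∃ x ∈ S, ∀ y ∈ S, ∀ w : W, ∃ v : W, y • x • v = x • w := by
  obtain ⟨_, ⟨x, hx, rfl⟩, hmin⟩ := IsArtinian.set_has_minimal
    ((fun x => LinearMap.range (LinearMap.lsmul R W x)) '' S) (hS.image _)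
  refine ⟨x, hx, fun y hy w => ?_⟩
  have hle : LinearMap.range (LinearMap.lsmul R W (y * x)) ≤
      LinearMap.range (LinearMap.lsmul R W x) := by
    rintro _ ⟨v, rfl⟩
    exact ⟨y • v, by simp [smul_smul, mul_comm]⟩
  have heq := eq_of_le_of_not_lt hle (hmin _ ⟨y * x, S.mul_mem hy hx, rfl⟩)
  obtain ⟨v, hv⟩ := heq.ge ⟨w, rfl⟩
  exact ⟨v, (mul_smul y x v).symm.trans hv⟩

lemma exact_subtype_range {R A B C : Type*} [CommRing R] [AddCommGroup A] [Module R A]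
    [AddCommGroup B] [Module R B] [AddCommGroup C] [Module R C] {f : A →ₗ[R] B} {g : B →ₗ[R] C}
    (hfg : Function.Exact f g) : Function.Exact (LinearMap.range f).subtype g :=
  LinearMap.exact_iff.2 (hfg.linearMap_ker_eq.trans (Submodule.range_subtype _).symm)

namespace LocalCohomologyModule

variable {R : Type u} [CommRing R] [IsNoetherianRing R] [IsLocalRing R] {k : ℕ} {A B C : Type u}
  [AddCommGroup A] [Module R A] [AddCommGroup B] [Module R B] [AddCommGroup C] [Module R C]

lemma map_surjective_of_supportDim_le [Module.Finite R A] (hA : Module.supportDim R A ≤ k)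
    {f : A →ₗ[R] B} (hf : Function.Surjective f) :
    Function.Surjective (map (maximalIdeal R) k f) := by
  have hker : Module.supportDim R (LinearMap.ker f) < (k + 1 : ℕ) :=
    ENat.WithBot.lt_add_one_iff.2
      ((Module.supportDim_le_of_injective _ (LinearMap.ker f).injective_subtype).trans hA)
  have := subsingleton_of_supportDim_lt hker
  exact fun z => (exact_map_δ (LinearMap.ker f).injective_subtype
    (LinearMap.exact_subtype_ker_map f) hf z).1 (Subsingleton.elim _ _)

lemma exact_map_map_of_supportDim_le [Module.Finite R A] (hA : Module.supportDim R A ≤ k)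
    {f : A →ₗ[R] B} {g : B →ₗ[R] C} (hfg : Function.Exact f g) (hg : Function.Surjective g) :
    Function.Exact (map (maximalIdeal R) k f) (map (maximalIdeal R) k g) := by
  have hexact := exact_map_map (I := maximalIdeal R) (i := k)
    (LinearMap.range f).injective_subtype (exact_subtype_range hfg) hg
  have hsurj := map_surjective_of_supportDim_le hA f.surjective_rangeRestrict
  have hcomp : Function.Exact
      (map (maximalIdeal R) k ((LinearMap.range f).subtype ∘ₗ f.rangeRestrict))
      (map (maximalIdeal R) k g) := by
    rwa [map_comp, hsurj.comp_exact_iff_exact]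
  exact hcomp

lemma map_surjective_of_exact_of_subsingleton [Module.Finite R A]
    (hA : Module.supportDim R A ≤ (k + 1 : ℕ))
    (h : Subsingleton (LocalCohomologyModule (maximalIdeal R) (k + 1) A))
    {f : A →ₗ[R] B} {g : B →ₗ[R] C} (hfg : Function.Exact f g) (hg : Function.Surjective g) :
    Function.Surjective (map (maximalIdeal R) k g) := by
  have := (map_surjective_of_supportDim_le hA f.surjective_rangeRestrict).subsingleton
  exact fun z => (exact_map_δ (LinearMap.range f).injective_subtype
    (exact_subtype_range hfg) hg z).1 (Subsingleton.elim _ _)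

variable [Module.Finite R A]

lemma exists_isParameter_forall_smul_eq_zero (hA : Module.supportDim R A = (k + 1 : ℕ))
    (h : Subsingleton (LocalCohomologyModule (maximalIdeal R) (k + 1) A)) :
    ∃ x : R, IsParameter A x ∧ ∀ y : R, IsParameter A y →
      ∀ z : LocalCohomologyModule (maximalIdeal R) k (QuotSMulTop y A), x • z = 0 := by
  have : IsArtinian R (LocalCohomologyModule (maximalIdeal R) k A) := isArtinian k
  have hpos : 0 < Module.supportDim R A := hA ▸ mod_cast k.succ_pos
  obtain ⟨p, hp, -⟩ := exists_isParameter_isParameter hpos hpos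
  let S : Subsemigroup R := ⟨{x | IsParameter A x}, IsParameter.mul⟩
  obtain ⟨x, hx, hmin⟩ := exists_mem_forall_exists_smul_smul_eq (S := S)
    (W := LocalCohomologyModule (maximalIdeal R) k A) ⟨p, hp⟩
  refine ⟨x, hx, fun y hy z => ?_⟩
  obtain ⟨w, rfl⟩ := map_surjective_of_exact_of_subsingleton hA.le h
    (LinearMap.exact_lsmul_mkQ_smul_top A y) (Submodule.mkQ_surjective _) z
  obtain ⟨v, hv⟩ := hmin y hy w
  rw [← map_smul, ← hv, map_smul,
    smul_eq_zero_of_mem_annihilator (QuotSMulTop.mem_annihilator A y)]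

lemma eval_surjective_of_supportDim_nonpos (hA : Module.supportDim R A ≤ 0) :
    Function.Surjective (eval (maximalIdeal R) A) :=
  LinearMap.range_eq_top.1
    (range_eval.trans (powTorsion_maximalIdeal_eq_top_of_supportDim_nonpos hA))

lemma mem_annihilator_of_forall_smul_eq_zero (hA : Module.supportDim R A ≤ 0) {x : R}
    (hx : ∀ z : LocalCohomologyModule (maximalIdeal R) 0 A, x • z = 0) :
    x ∈ Module.annihilator R A := by
  refine Module.mem_annihilator.2 fun a => ?_
  obtain ⟨z, rfl⟩ := eval_surjective_of_supportDim_nonpos hA a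
  rw [← map_smul, hx, map_zero]

lemma nontrivial_one [Nontrivial A] (hA : Module.supportDim R A = (1 : ℕ)) :
    Nontrivial (LocalCohomologyModule (maximalIdeal R) 1 A) := by
  by_contra h
  obtain ⟨x, hx, hkill⟩ := exists_isParameter_forall_smul_eq_zero (k := 0) hA
    (not_nontrivial_iff_subsingleton.1 h)
  have hdim := (hx.mul hx).supportDim_quotSMulTop (k := 0) hA
  exact hx.notMem_annihilator (mem_annihilator_of_mem_annihilator_quotSMulTop_mul_self hx.1
    (mem_annihilator_of_forall_smul_eq_zero hdim.le (hkill _ (hx.mul hx))))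

lemma exists_isParameter_smul_surjective (hA : Module.supportDim R A = (k + 2 : ℕ)) {x : R}
    (hx : IsParameter A x) : ∃ y : R, IsParameter A y ∧ Function.Surjective
      (x • · : LocalCohomologyModule (maximalIdeal R) (k + 1) (QuotSMulTop y A) → _) := by
  have hAx := hx.supportDim_quotSMulTop hA
  obtain ⟨y, hy, hyx⟩ := exists_isParameter_isParameter (R := R) (M := A) (N := QuotSMulTop x A)
    (by rw [hA]; exact_mod_cast Nat.succ_pos _) (by rw [hAx]; exact_mod_cast Nat.succ_pos _)
  have hAyx : Module.supportDim R (QuotSMulTop x (QuotSMulTop y A)) < (k + 1 : ℕ) := by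
    rw [supportDim_quotSMulTop_comm, hyx.supportDim_quotSMulTop hAx]
    exact_mod_cast k.lt_succ_self
  have := subsingleton_of_supportDim_lt hAyx
  refine ⟨y, hy, fun z => ?_⟩
  obtain ⟨w, rfl⟩ := (exact_map_map_of_supportDim_le (hy.supportDim_quotSMulTop hA).le
    (LinearMap.exact_lsmul_mkQ_smul_top _ x) (Submodule.mkQ_surjective _) z).1
    (Subsingleton.elim _ _)
  exact ⟨w, (map_lsmul x w).symm⟩

/-- Grothendieck's nonvanishing theorem. -/
lemma nontrivial_of_supportDim_eq {i : ℕ} (hA : Module.supportDim R A = i) :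
    Nontrivial (LocalCohomologyModule (maximalIdeal R) i A) := by
  induction i generalizing A with
  | zero =>
    have : Nontrivial A := (Module.supportDim_ne_bot_iff_nontrivial R A).1 (by simp [hA])
    exact (eval_surjective_of_supportDim_nonpos hA.le).nontrivial
  | succ i ih =>
    have : Nontrivial A := (Module.supportDim_ne_bot_iff_nontrivial R A).1 (by simp [hA])
    cases i with
    | zero => exact nontrivial_one hA
    | succ k =>
      by_contra h
      obtain ⟨x, hx, hkill⟩ := exists_isParameter_forall_smul_eq_zero hA
        (not_nontrivial_iff_subsingleton.1 h)
      obtain ⟨y, hy, hsurj⟩ := exists_isParameter_smul_surjective hA hx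
      have := ih (hy.supportDim_quotSMulTop hA)
      obtain ⟨z, hz⟩ := exists_ne
        (0 : LocalCohomologyModule (maximalIdeal R) (k + 1) (QuotSMulTop y A))
      obtain ⟨w, rfl⟩ := hsurj z
      exact hz (hkill y hy w)

end LocalCohomologyModule
end Nonvanishing

section CohomologicalDimension

open IsLocalRing

lemma exists_natCast_eq {d : WithBot ℕ∞} (hbot : d ≠ ⊥) (htop : d ≠ ⊤) : ∃ n : ℕ, d = n := by
  lift d to ℕ∞ using hbot
  lift d to ℕ using mod_cast htop
  exact ⟨d, rfl⟩

lemma maximalIdeal_le_radical_of_mem_minimalPrimes {R : Type*} [CommRing R] [IsLocalRing R]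
    {I : Ideal R} (hI : maximalIdeal R ∈ I.minimalPrimes) : maximalIdeal R ≤ I.radical := by
  rw [Ideal.radical_eq_sInf]
  exact le_sInf fun Q hQ => hI.2 ⟨hQ.2, hQ.1⟩ (le_maximalIdeal hQ.2.ne_top)

lemma exists_finset_maximalIdeal_mem_minimalPrimes {R : Type*} [CommRing R] [IsNoetherianRing R]
    [IsLocalRing R] {I : Ideal R} (hI : I ≠ ⊤) {e : ℕ} (he : ringKrullDim (R ⧸ I) = e) :
    ∃ S : Finset R, S.card = e ∧ maximalIdeal R ∈ (I ⊔ Ideal.span (S : Set R)).minimalPrimes := by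
  classical
  have := Ideal.Quotient.nontrivial_iff.2 hI
  have hmk := Ideal.Quotient.mk_surjective (I := I)
  have : IsLocalRing (R ⧸ I) := .of_surjective' _ hmk
  obtain ⟨T, hT, hcard⟩ :=
    (maximalIdeal (R ⧸ I)).exists_finset_card_eq_height_of_isNoetherianRing
  rw [← maximalIdeal_height_eq_ringKrullDim, ← hcard] at he
  obtain ⟨S, -, hinj, rfl⟩ := Finset.exists_subset_injOn_image_eq_of_surjOn Set.univ T
    (fun t _ => Set.image_univ_of_surjective hmk ▸ Set.mem_univ t)
  refine ⟨S, Finset.card_image_of_injOn hinj ▸ mod_cast he, ?_⟩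
  have hm := Ideal.minimalPrimes_comap_of_surjective hmk hT
  rwa [Finset.coe_image, ← Ideal.map_span, Ideal.comap_map_quotientMk,
    eq_maximalIdeal (Ideal.comap_isMaximal_of_surjective _ hmk)] at hm

variable {R : Type u} [CommRing R] {I : Ideal R}

namespace LocalCohomologyModule

variable {A : Type u} [AddCommGroup A] [Module R A]

lemma subsingleton_of_cohomologicalDimension_lt {i : ℕ}
    (hi : cohomologicalDimension I (ModuleCat.of R A) < i) :
    Subsingleton (LocalCohomologyModule I i A) := by
  rcases i with _ | i
  · exact absurd hi not_lt_zero
  · refine subsingleton_of_localCohomology (not_nontrivial_iff_subsingleton.1 fun hnt => ?_)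
    exact hi.not_ge (le_sSup ⟨i + 1, rfl, hnt⟩)

lemma subsingleton_maximalIdeal_of_cohomologicalDimension_le [IsNoetherianRing R] [IsLocalRing R]
    (hI : I ≠ ⊤) {c e i : ℕ} (hc : cohomologicalDimension I (ModuleCat.of R A) ≤ c)
    (he : ringKrullDim (R ⧸ I) = e) (hi : c + e < i) :
    Subsingleton (LocalCohomologyModule (maximalIdeal R) i A) := by
  obtain ⟨S, rfl, hS⟩ := exists_finset_maximalIdeal_mem_minimalPrimes hI he
  have hvan := subsingleton_sup_span_finset (I := I) (A := A) S
    (fun j hj => subsingleton_of_cohomologicalDimension_lt (hc.trans_lt (mod_cast hj))) i hi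
  obtain ⟨i, rfl⟩ := Nat.exists_eq_add_one_of_ne_zero (Nat.ne_zero_of_lt hi)
  refine (subsingleton_succ_congr (fun E _ _ => le_antisymm ?_ ?_) i).1 hvan
  · exact powTorsion_le_of_le_radical (IsNoetherian.noetherian _)
      (maximalIdeal_le_radical_of_mem_minimalPrimes hS)
  · exact powTorsion_le_of_le_radical (IsNoetherian.noetherian _) (hS.1.2.trans Ideal.le_radical)

end LocalCohomologyModule

theorem height_lt_cohomologicalDimension_of_height_lt_dim_sub_general [IsNoetherianRing R]
    [IsLocalRing R] (hI : I ≠ ⊤) (M : Type u) [AddCommGroup M] [Module R M] [Module.Finite R M] :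
    Module.supportDim R M ≤
      cohomologicalDimension I (ModuleCat.of R M) + ringKrullDim (R ⧸ I) := by
  by_contra! hlt
  have := Ideal.Quotient.nontrivial_iff.2 hI
  have : IsLocalRing (R ⧸ I) := .of_surjective' _ (Ideal.Quotient.mk_surjective (I := I))
  obtain ⟨e, he⟩ := exists_natCast_eq (d := ringKrullDim (R ⧸ I)) ringKrullDim_ne_bot
    ringKrullDim_ne_top
  generalize hc : cohomologicalDimension I (ModuleCat.of R M) = c at hlt
  obtain ⟨n, hn⟩ := exists_natCast_eq (d := Module.supportDim R M) hlt.ne_bot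
    ((Module.supportDim_le_ringKrullDim R M).trans_lt ringKrullDim_lt_top).ne
  rw [he, hn] at hlt
  cases c with
  | top => exact not_top_lt (mod_cast hlt : (⊤ : ℕ∞) < n)
  | coe c =>
    have := LocalCohomologyModule.subsingleton_maximalIdeal_of_cohomologicalDimension_le hI
      hc.le he (i := n) (mod_cast hlt)
    have := LocalCohomologyModule.nontrivial_of_supportDim_eq hn
    exact not_subsingleton _ ‹_›

end CohomologicalDimension

/-- in a Noetherian local ring, if `p` is a prime ideal with
`ht(p) < dim R - dim (R/p)`, then `cd(p) > ht(p)`. -/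
theorem height_lt_cohomologicalDimension_of_height_lt_dim_sub
    (R : Type u) [CommRing R] [IsNoetherianRing R] [IsLocalRing R]
    (p : Ideal R) (hp : p.IsPrime) (h n e : ℕ)
    (hh : idealHeight p = (h : ℕ∞))
    (hn : ringKrullDim R = (n : WithBot ℕ∞))
    (he : ringKrullDim (R ⧸ p) = (e : WithBot ℕ∞))
    (hlt : h < n - e) :
    (h : ℕ∞) < cohomologicalDimension p (ModuleCat.of R R) := by
  have hdim := height_lt_cohomologicalDimension_of_height_lt_dim_sub_general hp.ne_top R
  rw [Module.supportDim_self_eq_ringKrullDim, hn, he] at hdim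
  by_contra! hle
  have : (n : WithBot ℕ∞) ≤ (h : ℕ∞) + e := hdim.trans (by gcongr; exact_mod_cast hle)
  norm_cast at this
  omega
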